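/- Let d ≥ 1 be an integer, 0 < δ < 1 and ε > 0. If p is a real polynomial of degree n ≥ d such that for every x ∈ [−1,1] with |p(x)| < ε one has max_{1 ≤ j ≤ d} |p^{(j)}(x)| ≥ δ, then Leb{x ∈ [−1,1] : |p(x)| < ε} ≤ C · ε^{1/d}, where C := (2^{d+3}/δ²) · (4 n^{2(d+1)} · max_{x∈[−1,1]} |p(x)| + 1). -/

import Mathlib

open MeasureTheory Set Filter

noncomputable section

/-!
If `|f| ≤ ε` at `2 ^ j` points at mutual distance at least `h`, then `j` rounds of the mean value
theorem, each applied to disjoint pairs of neighbours, give a point where `|f⁽ʲ⁾| ≤ ε (2 / h) ^ j`.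
So where `|f⁽ʲ⁾| ≥ l` on an interval, `{|f| ≤ ε}` cannot contain widely spaced points, and its
measure is `O((ε / l) ^ (1 / j))`. For the theorem, cut `[-1, 1]` into intervals so short that the
derivative which is at least `δ` at one point of `{|p| < ε}` stays at least `δ / 2` on the whole
interval. The number of intervals is controlled by a bound on the next derivative, which for a
polynomial is Markov's inequality: Chebyshev polynomials are extremal at the endpoint `1`, and an
affine map carries the endpoint to any other point of `[-1, 1]` at the cost of a factor `2 ^ k`.
-/

theorem exists_separated_of_lt_volume {h : ℝ} (hh : 0 ≤ h) (m : ℕ) {E : Set ℝ} (hE : IsClosed E)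
    (hbdd : BddBelow E) (hvol : ENNReal.ofReal (m * h) < volume E) :
    ∃ x : ℕ → ℝ, (∀ i ≤ m, x i ∈ E) ∧ ∀ i < m, x i + h ≤ x (i + 1) := by
  induction m generalizing E with
  | zero =>
    obtain ⟨y, hy⟩ := nonempty_of_measure_ne_zero (bot_le.trans_lt hvol).ne'
    exact ⟨fun _ => y, fun _ _ => hy, fun i hi => absurd hi i.not_lt_zero⟩
  | succ m ih =>
    set s := sInf E
    have hs : s ∈ E := hE.csInf_mem (nonempty_of_measure_ne_zero (bot_le.trans_lt hvol).ne') hbdd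
    have hcover : E ⊆ Icc s (s + h) ∪ (E ∩ Ici (s + h)) := fun y hy =>
      (le_total y (s + h)).imp (fun hle => ⟨csInf_le hbdd hy, hle⟩) fun hle => ⟨hy, hle⟩
    have hrest : ENNReal.ofReal (m * h) < volume (E ∩ Ici (s + h)) := by
      by_contra! hle
      refine hvol.not_ge ?_
      calc volume E
          ≤ volume (Icc s (s + h)) + volume (E ∩ Ici (s + h)) :=
            (measure_mono hcover).trans (measure_union_le _ _)
        _ ≤ ENNReal.ofReal h + ENNReal.ofReal (m * h) := by
            gcongr
            rw [Real.volume_Icc, add_sub_cancel_left]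
        _ = ENNReal.ofReal ((m + 1 : ℕ) * h) := by
            rw [← ENNReal.ofReal_add hh (by positivity)]
            congr 1
            push_cast
            ring
    obtain ⟨x, hxE, hx⟩ := ih (hE.inter isClosed_Ici) (hbdd.mono inter_subset_left) hrest
    refine ⟨fun i => Nat.casesOn i s x, ?_, ?_⟩
    · rintro (_ | i) hi
      · exact hs
      · exact (hxE i (by omega)).1
    · rintro (_ | i) hi
      · exact (hxE 0 (by omega)).2
      · exact hx i (by omega)

theorem measure_Icc_inter_le_nsmul {α : Type*} [LinearOrder α] [MeasurableSpace α] {μ : Measure α}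
    [NullSingletonClass μ] {E : Set α} {u : ℕ → α} {c : ENNReal} {m : ℕ}
    (h : ∀ i < m, μ (Icc (u i) (u (i + 1)) ∩ E) ≤ c) :
    μ (Icc (u 0) (u m) ∩ E) ≤ m • c := by
  induction m with
  | zero =>
    rw [Icc_self, zero_smul, nonpos_iff_eq_zero]
    exact measure_mono_null inter_subset_left (measure_singleton _)
  | succ m ih =>
    calc μ (Icc (u 0) (u (m + 1)) ∩ E)
        ≤ μ (Icc (u 0) (u m) ∩ E ∪ Icc (u m) (u (m + 1)) ∩ E) := by
          rw [← union_inter_distrib_right]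
          exact measure_mono (inter_subset_inter_left _ Icc_subset_Icc_union_Icc)
      _ ≤ m • c + c :=
          (measure_union_le _ _).trans
            (add_le_add (ih fun i hi => h i (hi.trans m.lt_succ_self)) (h m m.lt_succ_self))
      _ = (m + 1) • c := (succ_nsmul c m).symm

theorem exists_monotone_partition_mul_length_le {a b K η : ℝ} (hab : a ≤ b) (hK : 0 ≤ K)
    (hη : 0 < η) :
    ∃ (m : ℕ) (u : ℕ → ℝ), Monotone u ∧ u 0 = a ∧ u m = b ∧
      m ≤ K * (b - a) / η + 1 ∧ ∀ i, K * (u (i + 1) - u i) ≤ η := by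
  have : 0 ≤ b - a := sub_nonneg.mpr hab
  set r := K * (b - a) / η
  set m := ⌊r⌋₊ + 1 with hm
  have hm0 : (0 : ℝ) < m := by positivity
  have hrm : r ≤ m := mod_cast (Nat.lt_floor_add_one r).le
  refine ⟨m, fun i => a + i * ((b - a) / m), fun i k hik => by dsimp only; gcongr, by simp, ?_, ?_,
    fun i => ?_⟩
  · field_simp
    ring
  · rw [hm, Nat.cast_add_one]
    gcongr
    exact Nat.floor_le (by positivity)
  · calc K * (a + (i + 1 : ℕ) * ((b - a) / m) - (a + i * ((b - a) / m)))
        = K * (b - a) / m := by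
          push_cast
          ring
      _ ≤ η := by rwa [div_le_iff₀ hm0, mul_comm η, ← div_le_iff₀ hη]

section SublevelSets

variable {f : ℝ → ℝ} {a b ε : ℝ}

theorem exists_abs_deriv_le {h : ℝ} (hh : 0 < h) (hab : a + h ≤ b) (hfc : ContinuousOn f (Icc a b))
    (hfd : DifferentiableOn ℝ f (Ioo a b)) (ha : |f a| ≤ ε) (hb : |f b| ≤ ε) :
    ∃ y ∈ Ioo a b, |deriv f y| ≤ ε * (2 / h) := by
  obtain ⟨y, hy, hslope⟩ := exists_deriv_eq_slope f (by linarith) hfc hfd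
  refine ⟨y, hy, ?_⟩
  have hε : 0 ≤ ε := (abs_nonneg _).trans ha
  calc |deriv f y| = |f b - f a| / (b - a) := by
        rw [hslope, abs_div, abs_of_pos (by linarith : 0 < b - a)]
    _ ≤ (ε + ε) / h := by
        gcongr
        · exact (abs_sub _ _).trans (add_le_add hb ha)
        · linarith
    _ = ε * (2 / h) := by ring

theorem exists_abs_iteratedDeriv_le {s : Set ℝ} (hs : s.OrdConnected) {h : ℝ} (hh : 0 < h) {j : ℕ}
    (hf : ContDiff ℝ j f) {x : ℕ → ℝ} (hxs : ∀ i < 2 ^ j, x i ∈ s)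
    (hfx : ∀ i < 2 ^ j, |f (x i)| ≤ ε) (hsep : ∀ i, i + 1 < 2 ^ j → x i + h ≤ x (i + 1)) :
    ∃ ξ ∈ s, |iteratedDeriv j f ξ| ≤ ε * (2 / h) ^ j := by
  induction j generalizing f ε x with
  | zero => exact ⟨x 0, hxs 0 one_pos, by simpa using hfx 0 one_pos⟩
  | succ j ih =>
    have hf' : Differentiable ℝ f ∧ ContDiff ℝ j (deriv f) := by
      have hsucc := contDiff_succ_iff_deriv.mp (mod_cast hf : ContDiff ℝ (j + 1) f)
      exact ⟨hsucc.1, hsucc.2.2⟩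
    have hy : ∀ i < 2 ^ j, ∃ y ∈ Ioo (x (2 * i)) (x (2 * i + 1)), |deriv f y| ≤ ε * (2 / h) :=
      fun i hi => exists_abs_deriv_le hh (hsep _ (by omega)) hf'.1.continuous.continuousOn
        hf'.1.differentiableOn (hfx _ (by omega)) (hfx _ (by omega))
    choose! y hy hfy using hy
    obtain ⟨ξ, hξ, hle⟩ := ih hf'.2
      (fun i hi => hs.out (hxs _ (by omega)) (hxs _ (by omega)) (Ioo_subset_Icc_self (hy i hi)))
      hfy fun i hi => by
        have hgap : x (2 * i + 1) + h ≤ x (2 * (i + 1)) := hsep (2 * i + 1) (by omega)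
        linarith [(hy i (by omega)).2, (hy (i + 1) hi).1]
    refine ⟨ξ, hξ, ?_⟩
    rwa [iteratedDeriv_succ', pow_succ', ← mul_assoc]

theorem volume_abs_le_le_of_le_abs_iteratedDeriv {l : ℝ} {j : ℕ} (hj : j ≠ 0)
    (hf : ContDiff ℝ j f) (hε : 0 < ε) (hl : 0 < l)
    (hfl : ∀ x ∈ Icc a b, l ≤ |iteratedDeriv j f x|) :
    volume {x ∈ Icc a b | |f x| ≤ ε} ≤
      ENNReal.ofReal (2 ^ (j + 1) * (ε / l) ^ ((j : ℝ)⁻¹)) := by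
  set t := (ε / l) ^ ((j : ℝ)⁻¹)
  have ht : 0 < t := by positivity
  have htj : t ^ j = ε / l := Real.rpow_inv_natCast_pow (by positivity) hj
  -- Only `2 ^ j - 1` gaps separate `2 ^ j` points, so the gaps may exceed `2 * t`.
  obtain ⟨m, hm⟩ : ∃ m : ℕ, 2 ^ j = m + 1 := Nat.exists_eq_add_one.mpr (by positivity)
  have hmR : (2 : ℝ) ^ j = m + 1 := mod_cast hm
  have hm0 : (0 : ℝ) < m := by
    have : (1 : ℝ) < 2 ^ j := one_lt_pow₀ one_lt_two hj
    linarith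
  set h := 2 ^ (j + 1) * t / m with hh
  have hth : 2 * t < h := by
    rw [hh, lt_div_iff₀ hm0, pow_succ, hmR]
    linarith
  have hh0 : 0 < h := by linarith
  by_contra! hvol
  have hclosed : IsClosed {x ∈ Icc a b | |f x| ≤ ε} :=
    isClosed_Icc.inter (isClosed_le hf.continuous.abs continuous_const)
  obtain ⟨x, hx, hsep⟩ := exists_separated_of_lt_volume hh0.le m hclosed
    (bddBelow_Icc.mono inter_subset_left) (by rwa [hh, mul_div_cancel₀ _ hm0.ne'])
  obtain ⟨ξ, hξ, hle⟩ := exists_abs_iteratedDeriv_le ordConnected_Icc hh0 hf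
    (fun i hi => (hx i (by omega)).1) (fun i hi => (hx i (by omega)).2)
    fun i hi => hsep i (by omega)
  refine (hfl ξ hξ).not_gt (hle.trans_lt ?_)
  calc ε * (2 / h) ^ j < ε * (1 / t) ^ j := by
        gcongr ε * ?_ ^ j
        rw [div_lt_div_iff₀ hh0 ht]
        linarith
    _ = l := by
        rw [one_div, inv_pow, htj]
        field_simp

theorem abs_sub_mul_le_abs_of_abs_deriv_le {g : ℝ → ℝ} {K : ℝ}
    (hg : ∀ x ∈ Icc a b, DifferentiableAt ℝ g x) (hK : ∀ x ∈ Icc a b, |deriv g x| ≤ K)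
    {x y : ℝ} (hx : x ∈ Icc a b) (hy : y ∈ Icc a b) :
    |g x| - K * (b - a) ≤ |g y| := by
  have hlip : |g x - g y| ≤ K * |x - y| :=
    (convex_Icc a b).norm_image_sub_le_of_norm_deriv_le hg hK hy hx
  have hK0 : 0 ≤ K := (abs_nonneg _).trans (hK x hx)
  have hmul : K * |x - y| ≤ K * (b - a) :=
    mul_le_mul_of_nonneg_left (Real.dist_le_of_mem_Icc hx hy) hK0
  linarith [abs_sub_abs_le_abs_sub (g x) (g y)]

theorem div_rpow_inv_natCast_le {l : ℝ} (hl : 0 < l) (hl1 : l ≤ 1) (hε : 0 ≤ ε) (hε1 : ε ≤ 1)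
    {j d : ℕ} (hj : 1 ≤ j) (hjd : j ≤ d) :
    (ε / l) ^ ((j : ℝ)⁻¹) ≤ ε ^ ((d : ℝ)⁻¹) / l := by
  have hj' : (1 : ℝ) ≤ j := mod_cast hj
  have hl_le : l ≤ l ^ ((j : ℝ)⁻¹) :=
    Real.self_le_rpow_of_le_one hl.le hl1 (inv_le_one_of_one_le₀ hj')
  have hε_le : ε ^ ((j : ℝ)⁻¹) ≤ ε ^ ((d : ℝ)⁻¹) :=
    Real.rpow_le_rpow_of_exponent_ge' hε hε1 (by positivity) (by gcongr)
  rw [Real.div_rpow hε hl.le]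
  gcongr

theorem volume_abs_lt_le_of_mul_length_le {δ K : ℝ} {d : ℕ}
    (hf : ContDiff ℝ (d + 1) f) (hδ : 0 < δ) (hδ2 : δ ≤ 2) (hε : 0 < ε) (hε1 : ε ≤ 1)
    (hfK : ∀ j, 1 ≤ j → j ≤ d → ∀ x ∈ Icc a b, |iteratedDeriv (j + 1) f x| ≤ K)
    (hfδ : ∀ x ∈ Icc a b, |f x| < ε → ∃ j, 1 ≤ j ∧ j ≤ d ∧ δ ≤ |iteratedDeriv j f x|)
    (hlen : K * (b - a) ≤ δ / 2) :
    volume {x ∈ Icc a b | |f x| < ε} ≤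
      ENNReal.ofReal (2 ^ (d + 2) / δ * ε ^ ((d : ℝ)⁻¹)) := by
  rcases {x ∈ Icc a b | |f x| < ε}.eq_empty_or_nonempty with hempty | ⟨x, hx, hfx⟩
  · rw [hempty, measure_empty]
    exact zero_le
  obtain ⟨j, hj1, hjd, hδj⟩ := hfδ x hx hfx
  have hdiff : Differentiable ℝ (iteratedDeriv j f) :=
    hf.differentiable_iteratedDeriv j (mod_cast Nat.lt_succ_of_le hjd)
  have hlow : ∀ y ∈ Icc a b, δ / 2 ≤ |iteratedDeriv j f y| := fun y hy => by
    have := abs_sub_mul_le_abs_of_abs_deriv_le (fun z _ => hdiff z)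
      (fun z hz => iteratedDeriv_succ (f := f) ▸ hfK j hj1 hjd z hz) hx hy
    linarith
  calc volume {x ∈ Icc a b | |f x| < ε}
      ≤ volume {x ∈ Icc a b | |f x| ≤ ε} := measure_mono fun y hy => ⟨hy.1, hy.2.le⟩
    _ ≤ ENNReal.ofReal (2 ^ (j + 1) * (ε / (δ / 2)) ^ ((j : ℝ)⁻¹)) :=
        volume_abs_le_le_of_le_abs_iteratedDeriv (by omega)
          (hf.of_le (mod_cast hjd.trans d.le_succ)) hε (by positivity) hlow
    _ ≤ ENNReal.ofReal (2 ^ (d + 1) * (ε ^ ((d : ℝ)⁻¹) / (δ / 2))) := by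
        gcongr
        · exact one_le_two
        · exact div_rpow_inv_natCast_le (by positivity) (by linarith) hε.le hε1 hj1 hjd
    _ = ENNReal.ofReal (2 ^ (d + 2) / δ * ε ^ ((d : ℝ)⁻¹)) := by
        congr 1
        field_simp
        ring

theorem volume_abs_lt_le_of_exists_le_abs_iteratedDeriv {δ K : ℝ} {d : ℕ} (hab : a ≤ b)
    (hK : 0 ≤ K)
    (hf : ContDiff ℝ (d + 1) f) (hδ : 0 < δ) (hδ2 : δ ≤ 2) (hε : 0 < ε) (hε1 : ε ≤ 1)
    (hfK : ∀ j, 1 ≤ j → j ≤ d → ∀ x ∈ Icc a b, |iteratedDeriv (j + 1) f x| ≤ K)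
    (hfδ : ∀ x ∈ Icc a b, |f x| < ε → ∃ j, 1 ≤ j ∧ j ≤ d ∧ δ ≤ |iteratedDeriv j f x|) :
    volume {x ∈ Icc a b | |f x| < ε} ≤
      ENNReal.ofReal (2 ^ (d + 2) / δ ^ 2 * (2 * K * (b - a) + δ) * ε ^ ((d : ℝ)⁻¹)) := by
  obtain ⟨m, u, hu, rfl, rfl, hm, hshort⟩ :=
    exists_monotone_partition_mul_length_le hab hK (half_pos hδ)
  set c := 2 ^ (d + 2) / δ * ε ^ ((d : ℝ)⁻¹) with hc
  have hc0 : 0 ≤ c := by positivity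
  have hpiece : ∀ i < m,
      volume (Icc (u i) (u (i + 1)) ∩ {x | |f x| < ε}) ≤ ENNReal.ofReal c := fun i hi => by
    have hsub : Icc (u i) (u (i + 1)) ⊆ Icc (u 0) (u m) := Icc_subset_Icc (hu i.zero_le) (hu hi)
    exact volume_abs_lt_le_of_mul_length_le hf hδ hδ2 hε hε1
      (fun j hj hjd x hx => hfK j hj hjd x (hsub hx)) (fun x hx => hfδ x (hsub hx)) (hshort i)
  calc volume {x ∈ Icc (u 0) (u m) | |f x| < ε}
      ≤ m • ENNReal.ofReal c := measure_Icc_inter_le_nsmul hpiece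
    _ = ENNReal.ofReal (m * c) := by rw [← ENNReal.ofReal_nsmul, nsmul_eq_mul]
    _ ≤ ENNReal.ofReal ((K * (u m - u 0) / (δ / 2) + 1) * c) :=
        ENNReal.ofReal_le_ofReal (mul_le_mul_of_nonneg_right hm hc0)
    _ = _ := by
        congr 1
        rw [hc]
        field_simp

end SublevelSets

section Markov

open Polynomial

theorem iterate_derivative_comp_C_mul_X_add_C {R : Type*} [CommSemiring R] (p : R[X]) (a b : R)
    (k : ℕ) :
    derivative^[k] (p.comp (C a * X + C b)) =
      C (a ^ k) * (derivative^[k] p).comp (C a * X + C b) := by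
  induction k with
  | zero => simp
  | succ k ih =>
    simp only [Function.iterate_succ_apply', ih, derivative_C_mul, derivative_comp, derivative_add,
      derivative_X, derivative_C, mul_one, add_zero, pow_succ, C_mul, mul_assoc]

theorem iteratedDeriv_polynomial_eval {𝕜 : Type*} [NontriviallyNormedField 𝕜] (p : 𝕜[X]) (k : ℕ) :
    iteratedDeriv k (fun x => p.eval x) = fun x => (derivative^[k] p).eval x := by
  induction k with
  | zero => simp
  | succ k ih =>
    rw [iteratedDeriv_succ, ih, Function.iterate_succ_apply']
    exact funext fun _ => Polynomial.deriv _

theorem two_pow_mul_iterate_derivative_T_eval_one_le (n k : ℕ) :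
    2 ^ k * (derivative^[k] (Chebyshev.T ℝ n)).eval 1 ≤ 2 * (n : ℝ) ^ (2 * k) := by
  rcases lt_or_ge n k with hkn | hkn
  · rw [iterate_derivative_eq_zero (by simpa using hkn), eval_zero, mul_zero]
    positivity
  have hprod : 2 ^ k * (derivative^[k] (Chebyshev.T ℝ n)).eval 1 =
      ∏ i ∈ Finset.range k, 2 * ((n : ℝ) ^ 2 - i ^ 2) / (2 * i + 1) := by
    rw [Chebyshev.iterate_derivative_T_eval_one_eq_div, Finset.prod_div_distrib,
      Finset.prod_mul_distrib, Finset.prod_const, Finset.card_range, mul_div_assoc]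
    push_cast
    rfl
  rw [hprod]
  cases k with
  | zero => norm_num
  | succ k =>
    have hfactor : ∏ i ∈ Finset.range k,
        2 * ((n : ℝ) ^ 2 - (i + 1 : ℕ) ^ 2) / (2 * (i + 1 : ℕ) + 1) ≤
        ∏ _i ∈ Finset.range k, (n : ℝ) ^ 2 := by
      refine Finset.prod_le_prod (fun i hi => ?_) fun i _ => ?_
      · have hin : ((i + 1 : ℕ) : ℝ) ≤ n := mod_cast (Finset.mem_range.mp hi).trans hkn
        have : 0 ≤ (n : ℝ) ^ 2 - (i + 1 : ℕ) ^ 2 := sub_nonneg.mpr (by gcongr)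
        positivity
      · rw [div_le_iff₀ (by positivity)]
        push_cast
        nlinarith [sq_nonneg (n : ℝ), mul_nonneg (i.cast_nonneg (α := ℝ)) (sq_nonneg (n : ℝ))]
    calc _ ≤ (∏ _i ∈ Finset.range k, (n : ℝ) ^ 2) * (2 * (n : ℝ) ^ 2) := by
          rw [Finset.prod_range_succ']
          simpa using mul_le_mul_of_nonneg_right hfactor (by positivity : 0 ≤ 2 * (n : ℝ) ^ 2)
      _ = 2 * (n : ℝ) ^ (2 * (k + 1)) := by
          rw [Finset.prod_const, Finset.card_range]
          ring

variable {p : ℝ[X]} {n : ℕ} {M : ℝ}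

theorem abs_eval_one_iterate_derivative_le (hdeg : p.natDegree ≤ n)
    (hM : ∀ x ∈ Icc (-1 : ℝ) 1, |p.eval x| ≤ M) (k : ℕ) :
    |(derivative^[k] p).eval 1| ≤ M * (derivative^[k] (Chebyshev.T ℝ n)).eval 1 := by
  rcases ((abs_nonneg _).trans (hM 0 (by simp))).eq_or_lt with rfl | hM0
  · have hp : p = 0 := p.eq_zero_of_infinite_isRoot <|
      (Icc_infinite (by norm_num : (-1 : ℝ) < 1)).mono fun x hx => abs_nonpos_iff.mp (hM x hx)
    simp [hp]
  have hle : ∀ q : ℝ[X], q.natDegree ≤ n → (∀ x ∈ Icc (-1 : ℝ) 1, |q.eval x| ≤ M) →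
      (derivative^[k] q).eval 1 ≤ M * (derivative^[k] (Chebyshev.T ℝ n)).eval 1 := by
    intro q hq hqM
    have hscaled := Chebyshev.eval_iterate_derivative_le_of_forall_abs_le_one (P := C M⁻¹ * q)
      (k := k) le_rfl (natDegree_le_iff_degree_le.mp ((natDegree_C_mul_le _ _).trans hq))
      fun x hx => by
        rw [eval_mul, eval_C, abs_mul, abs_of_pos (inv_pos.mpr hM0), inv_mul_le_iff₀ hM0, mul_one]
        exact hqM x hx
    rwa [iterate_derivative_C_mul, eval_mul, eval_C, inv_mul_le_iff₀ hM0] at hscaled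
  refine abs_le'.mpr ⟨hle p hdeg hM, ?_⟩
  simpa only [iterate_derivative_neg, eval_neg] using
    hle (-p) (by rwa [natDegree_neg]) (by simpa only [eval_neg, abs_neg] using hM)

theorem exists_affine_mapsTo_Icc {x : ℝ} (hx : x ∈ Icc (-1 : ℝ) 1) :
    ∃ a b : ℝ, a + b = x ∧ 1 / 2 ≤ |a| ∧
      MapsTo (fun t => a * t + b) (Icc (-1) 1) (Icc (-1) 1) := by
  obtain ⟨hx1, hx2⟩ := hx
  rcases le_total 0 x with h0 | h0
  · refine ⟨(1 + x) / 2, (x - 1) / 2, by ring, le_abs.mpr (Or.inl (by linarith)), ?_⟩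
    rintro t ⟨ht1, ht2⟩
    constructor <;> nlinarith
  · refine ⟨(x - 1) / 2, (x + 1) / 2, by ring, le_abs.mpr (Or.inr (by linarith)), ?_⟩
    rintro t ⟨ht1, ht2⟩
    constructor <;> nlinarith

theorem abs_eval_iterate_derivative_le (hdeg : p.natDegree ≤ n)
    (hM : ∀ x ∈ Icc (-1 : ℝ) 1, |p.eval x| ≤ M) (k : ℕ) {x : ℝ} (hx : x ∈ Icc (-1 : ℝ) 1) :
    |(derivative^[k] p).eval x| ≤ 2 * (n : ℝ) ^ (2 * k) * M := by
  have hM0 : 0 ≤ M := (abs_nonneg _).trans (hM x hx)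
  obtain ⟨a, b, hab, ha, hmaps⟩ := exists_affine_mapsTo_Icc hx
  have hend : |a| ^ k * |(derivative^[k] p).eval x| ≤
      M * (derivative^[k] (Chebyshev.T ℝ n)).eval 1 := by
    have hcomp_deg : (p.comp (C a * X + C b)).natDegree ≤ n :=
      natDegree_comp_le.trans <|
        (mul_le_of_le_one_right (Nat.zero_le _) natDegree_linear_le).trans hdeg
    have hcomp := abs_eval_one_iterate_derivative_le hcomp_deg
      (fun t ht => by simpa [eval_comp] using hM _ (hmaps ht)) k
    simpa [iterate_derivative_comp_C_mul_X_add_C, eval_comp, hab, abs_mul] using hcomp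
  have ha_pow : 1 ≤ 2 ^ k * |a| ^ k := by
    rw [← mul_pow]
    exact one_le_pow₀ (by linarith)
  calc |(derivative^[k] p).eval x|
      ≤ 2 ^ k * |a| ^ k * |(derivative^[k] p).eval x| :=
        le_mul_of_one_le_left (abs_nonneg _) ha_pow
    _ = 2 ^ k * (|a| ^ k * |(derivative^[k] p).eval x|) := mul_assoc _ _ _
    _ ≤ 2 ^ k * (M * (derivative^[k] (Chebyshev.T ℝ n)).eval 1) := by gcongr
    _ = 2 ^ k * (derivative^[k] (Chebyshev.T ℝ n)).eval 1 * M := by ring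
    _ ≤ 2 * (n : ℝ) ^ (2 * k) * M :=
        mul_le_mul_of_nonneg_right (two_pow_mul_iterate_derivative_T_eval_one_le n k) hM0

theorem abs_iteratedDeriv_eval_le (hdeg : p.natDegree ≤ n)
    (hM : ∀ x ∈ Icc (-1 : ℝ) 1, |p.eval x| ≤ M) {k m : ℕ} (hk : k ≠ 0) (hkm : k ≤ m) {x : ℝ}
    (hx : x ∈ Icc (-1 : ℝ) 1) :
    |iteratedDeriv k (fun y => p.eval y) x| ≤ 2 * (n : ℝ) ^ (2 * m) * M := by
  have hM0 : 0 ≤ M := (abs_nonneg _).trans (hM x hx)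
  have hpow : n ^ (2 * k) ≤ n ^ (2 * m) := by
    rcases n.eq_zero_or_pos with rfl | hn
    · simp [hk]
    · exact Nat.pow_le_pow_right hn (by omega)
  rw [iteratedDeriv_polynomial_eval]
  refine (abs_eval_iterate_derivative_le hdeg hM k hx).trans ?_
  gcongr 2 * ?_ * M
  exact_mod_cast hpow

end Markov

theorem two_le_two_pow_div_sq_mul_rpow {δ ε A : ℝ} (hδ : 0 < δ) (hδ2 : δ ≤ 2) (hε : 1 ≤ ε)
    (hA : 0 ≤ A) (d : ℕ) :
    2 ≤ 2 ^ (d + 3) / δ ^ 2 * (A + 1) * ε ^ ((d : ℝ)⁻¹) := by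
  have hδ_sq : 2 * δ ^ 2 ≤ 2 ^ (d + 3) := by
    calc 2 * δ ^ 2 ≤ 2 * 2 ^ 2 := by gcongr
      _ ≤ 2 ^ d * 2 ^ 3 := by
        linarith [one_le_pow₀ (one_le_two (α := ℝ)) (n := d)]
      _ = 2 ^ (d + 3) := (pow_add 2 d 3).symm
  calc (2 : ℝ) = 2 * 1 * 1 := by norm_num
    _ ≤ 2 ^ (d + 3) / δ ^ 2 * (A + 1) * ε ^ ((d : ℝ)⁻¹) := by
      gcongr
      · rwa [le_div_iff₀ (by positivity)]
      · exact le_add_of_nonneg_left hA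
      · exact Real.one_le_rpow hε (by positivity)

theorem lojasiewicz_polynomial_general {d n : ℕ} {δ ε M : ℝ} (hδ : 0 < δ) (hδ2 : δ ≤ 2)
    (hε : 0 < ε) {p : Polynomial ℝ} (hdeg : p.natDegree ≤ n)
    (hM : ∀ x ∈ Icc (-1 : ℝ) 1, |p.eval x| ≤ M)
    (hpδ : ∀ x ∈ Icc (-1 : ℝ) 1, |p.eval x| < ε →
      ∃ j : ℕ, 1 ≤ j ∧ j ≤ d ∧ δ ≤ |iteratedDeriv j (fun y : ℝ => p.eval y) x|) :
    volume {x ∈ Icc (-1 : ℝ) 1 | |p.eval x| < ε} ≤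
      ENNReal.ofReal (2 ^ (d + 3) / δ ^ 2 * (4 * (n : ℝ) ^ (2 * (d + 1)) * M + 1) *
        ε ^ ((d : ℝ)⁻¹)) := by
  have hM0 : 0 ≤ M := (abs_nonneg _).trans (hM 0 (by simp))
  rcases le_total 1 ε with hε1 | hε1
  · calc volume {x ∈ Icc (-1 : ℝ) 1 | |p.eval x| < ε}
        ≤ volume (Icc (-1 : ℝ) 1) := measure_mono inter_subset_left
      _ = ENNReal.ofReal 2 := by norm_num [Real.volume_Icc]
      _ ≤ _ := ENNReal.ofReal_le_ofReal
        (two_le_two_pow_div_sq_mul_rpow hδ hδ2 hε1 (by positivity) d)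
  set K := 2 * (n : ℝ) ^ (2 * (d + 1)) * M with hK
  have hK0 : 0 ≤ K := by positivity
  have hp : ContDiff ℝ (d + 1) fun x => p.eval x := by
    simpa only [Polynomial.coe_aeval_eq_eval] using p.contDiff_aeval (𝕜 := ℝ) (d + 1)
  have hpK : ∀ j, 1 ≤ j → j ≤ d → ∀ x ∈ Icc (-1 : ℝ) 1,
      |iteratedDeriv (j + 1) (fun y => p.eval y) x| ≤ K := fun j _ hjd x hx =>
    abs_iteratedDeriv_eval_le hdeg hM j.succ_ne_zero (Nat.succ_le_succ hjd) hx
  refine (volume_abs_lt_le_of_exists_le_abs_iteratedDeriv (by norm_num) hK0 hp hδ hδ2 hε hε1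
    hpK hpδ).trans (ENNReal.ofReal_le_ofReal ?_)
  calc 2 ^ (d + 2) / δ ^ 2 * (2 * K * (1 - -1) + δ) * ε ^ ((d : ℝ)⁻¹)
      ≤ 2 ^ (d + 2) / δ ^ 2 * (2 * K * (1 - -1) + 2) * ε ^ ((d : ℝ)⁻¹) := by gcongr
    _ = _ := by
        rw [hK]
        ring

/-- Łojasiewicz-type inequality for real polynomials on `[-1,1]`: if whenever
`|p(x)| < ε` some derivative `p⁽ʲ⁾(x)`, `1 ≤ j ≤ d`, is at least `δ` in absolute value,
then `Leb {x ∈ [-1,1] : |p(x)| < ε} ≤ C ε^(1/d)` with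
`C = (2^(d+3)/δ²)(4 n^(2(d+1)) max_{[-1,1]} |p| + 1)`. -/
theorem lojasiewicz_polynomial (d n : ℕ) (hd : 1 ≤ d) (δ ε : ℝ)
    (hδ0 : 0 < δ) (hδ1 : δ < 1) (hε : 0 < ε)
    (p : Polynomial ℝ) (hdeg : p.natDegree = n) (hnd : d ≤ n)
    (hyp : ∀ x ∈ Set.Icc (-1 : ℝ) 1, |Polynomial.eval x p| < ε →
      ∃ j : ℕ, 1 ≤ j ∧ j ≤ d ∧
        δ ≤ |iteratedDeriv j (fun y : ℝ => Polynomial.eval y p) x|) :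
    volume {x ∈ Set.Icc (-1 : ℝ) 1 | |Polynomial.eval x p| < ε} ≤
      ENNReal.ofReal ((2 ^ (d + 3) / δ ^ 2 *
          (4 * (n : ℝ) ^ (2 * (d + 1)) *
              sSup ((fun x : ℝ => |Polynomial.eval x p|) '' Set.Icc (-1 : ℝ) 1) + 1)) *
        ε ^ ((d : ℝ)⁻¹)) :=
  lojasiewicz_polynomial_general hδ0 (by linarith) hε hdeg.le
    (fun _ hx => le_csSup (isCompact_Icc.image p.continuous.abs).bddAbove (mem_image_of_mem _ hx))
    hyp
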